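/- arXiv:2106.13053 — 2 statements merged into one kernel-verified Lean document; each statement's English description precedes it below -/
import Mathlib

section
/- Given a countable family {X_n : n ∈ ℕ} of subsets of [0,1]∩ℚ, there exist a point x ∈ [0,1] and an infinite set X ⊆ [0,1]∩ℚ converging to x such that for every n, either X ∩ X_n or X \ X_n is finite, and moreover X meets B(x,α_k) \ B(x,α_{k+1}) for all sufficiently large k, for any prescribed strictly decreasing null sequence (α_n) in (0,1/2]. -/
open Filter Topology Set

/-- The upper-density submeasure `φ(A) = sup_n |A ∩ [0,n]| / (n+1)`. -/
noncomputable def phi (A : Set ℕ) : ℝ :=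
  ⨆ n : ℕ, ((A ∩ Set.Iic n).ncard : ℝ) / (n + 1)

/-- The ideal of asymptotic density zero sets. -/
def densityZero : Set (Set ℕ) :=
  {A | Tendsto (fun n : ℕ => ((A ∩ Set.Iic n).ncard : ℝ) / (n + 1)) atTop (𝓝 0)}

/-- `I` is an ideal on `X` (containing all finite sets, proper). -/
def IsIdeal {X : Type*} (I : Set (Set X)) : Prop :=
  (∀ A ∈ I, ∀ B, B ⊆ A → B ∈ I) ∧ (∀ A ∈ I, ∀ B ∈ I, A ∪ B ∈ I) ∧
    (∀ A : Set X, A.Finite → A ∈ I) ∧ Set.univ ∉ I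

/-- `J` is a P⁺-ideal. -/
def IsPPlus {X : Type*} (J : Set (Set X)) : Prop :=
  ∀ A : ℕ → Set X, (∀ n, A (n + 1) ⊆ A n) → (∀ n, A n ∉ J) →
    ∃ B ∉ J, ∀ n, (B \ A n).Finite

/-- Katětov order. -/
def KatLE {X Y : Type*} (I : Set (Set X)) (J : Set (Set Y)) : Prop :=
  ∃ f : Y → X, ∀ A ∈ I, f ⁻¹' A ∈ J

/-- membership in the class `S` of strictly decreasing null sequences in `(0,1/2]`. -/
def memS (α : ℕ → ℝ) : Prop :=
  (∀ n, 0 < α n) ∧ (∀ n, α n ≤ 1 / 2) ∧ StrictAnti α ∧ Tendsto α atTop (𝓝 0)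

/-- The underlying countable set `[0,1] ∩ ℚ`. -/
abbrev Q01 : Type := ↥(Set.Icc (0 : ℚ) 1)

/-- The real number corresponding to a point of `[0,1] ∩ ℚ`. -/
noncomputable def qr (q : Q01) : ℝ := ((q : ℚ) : ℝ)

/-- The set `S ⊆ [0,1]∩ℚ` converges to `x ∈ ℝ`. -/
def ConvTo (S : Set Q01) (x : ℝ) : Prop :=
  ∀ ε > (0 : ℝ), {q ∈ S | ε ≤ |qr q - x|}.Finite

/-- `S` converges `I`-quickly with respect to `α` to the point `x`. -/
def IQuickTo (I : Set (Set ℕ)) (α : ℕ → ℝ) (S : Set Q01) (x : ℝ) : Prop :=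
  ConvTo S x ∧
    {n : ℕ | ∃ q ∈ S, α (n + 1) ≤ |qr q - x| ∧ |qr q - x| < α n} ∈ I

/-- `S` converges `I`-quickly with respect to `α`. -/
def IQuick (I : Set (Set ℕ)) (α : ℕ → ℝ) (S : Set Q01) : Prop :=
  ∃ x ∈ Set.Icc (0 : ℝ) 1, IQuickTo I α S x

/-- The ideal `conv(I,(α_n))` on `[0,1] ∩ ℚ`. -/
def convQI (I : Set (Set ℕ)) (α : ℕ → ℝ) : Set (Set Q01) :=
  {A | ∃ F : Finset (Set Q01), (∀ S ∈ F, IQuick I α S) ∧ A ⊆ ⋃₀ ↑F}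

/-- The ideal `conv` on `[0,1] ∩ ℚ` generated by convergent sequences. -/
def convIdeal : Set (Set Q01) :=
  {A | ∃ F : Finset (Set Q01),
    (∀ S ∈ F, ∃ x ∈ Set.Icc (0 : ℝ) 1, ConvTo S x) ∧ A ⊆ ⋃₀ ↑F}

/-- Identify a point of Cantor space `2^X` with a subset of `X`. -/
def toSet {X : Type*} (f : X → Bool) : Set X := {x | f x = true}

/-- `Σ⁰ₙ` sets of a topological space: `IsSigma0 1 = open`,
`IsSigma0 (n+1)` = countable unions of complements of `Σ⁰ₙ` sets. -/
def IsSigma0 {X : Type*} [TopologicalSpace X] : ℕ → Set X → Prop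
  | 0, _ => False
  | 1, S => IsOpen S
  | (n + 2), S => ∃ f : ℕ → Set X, (∀ k, IsSigma0 (n + 1) (f k)ᶜ) ∧ S = ⋃ k, f k


/-- `Y` meets every nonempty open subinterval of `(a, b)`. -/
def DenseBetween (a b : ℝ) (Y : Set Q01) : Prop :=
  ∀ c d, a ≤ c → c < d → d ≤ b → ∃ q ∈ Y, c < qr q ∧ qr q < d

theorem DenseBetween.mono {a b a' b' : ℝ} {Y : Set Q01} (h : DenseBetween a b Y)
    (ha : a ≤ a') (hb : b' ≤ b) : DenseBetween a' b' Y :=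
  fun c d hc hcd hd => h c d (ha.trans hc) hcd (hd.trans hb)

theorem denseBetween_univ : DenseBetween 0 1 Set.univ := by
  intro c d hc hcd hd
  obtain ⟨r, hr, hr'⟩ := exists_rat_btwn hcd
  have h0 : (0 : ℚ) ≤ r := by exact_mod_cast hc.trans hr.le
  have h1 : r ≤ 1 := by exact_mod_cast hr'.le.trans hd
  exact ⟨⟨r, h0, h1⟩, Set.mem_univ _, hr, hr'⟩

/-- A dense set, split in two, has a piece that is dense in some subinterval. -/
theorem DenseBetween.exists_inter_or_diff {a b : ℝ} {Y : Set Q01} (hab : a < b)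
    (h : DenseBetween a b Y) (X : Set Q01) :
    ∃ c d, a ≤ c ∧ c < d ∧ d ≤ b ∧ (DenseBetween c d (Y ∩ X) ∨ DenseBetween c d (Y \ X)) := by
  by_cases hX : DenseBetween a b (Y ∩ X)
  · exact ⟨a, b, le_rfl, hab, le_rfl, Or.inl hX⟩
  · simp only [DenseBetween] at hX
    push Not at hX
    obtain ⟨c, d, hc, hcd, hd, hempty⟩ := hX
    refine ⟨c, d, hc, hcd, hd, Or.inr fun u v hu huv hv => ?_⟩
    obtain ⟨q, hq, huq, hqv⟩ := h u v (hc.trans hu) huv (hv.trans hd)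
    refine ⟨q, ⟨hq, fun hqX => ?_⟩, huq, hqv⟩
    exact absurd (hqv.trans_le hv) (hempty q ⟨hq, hqX⟩ (hu.trans_lt huq)).not_gt

/-- One fusion step: shrink strictly inside `(a, b)` while deciding `X`. -/
theorem DenseBetween.exists_step {a b : ℝ} {Y : Set Q01} (hab : a < b)
    (h : DenseBetween a b Y) (X : Set Q01) :
    ∃ a' b' Y', a < a' ∧ a' < b' ∧ b' < b ∧ Y' ⊆ Y ∧ DenseBetween a' b' Y' ∧
      (Y' ⊆ X ∨ Disjoint Y' X) := by
  obtain ⟨c, d, hc, hcd, hd, hY⟩ := h.exists_inter_or_diff hab X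
  have hl : c < (2 * c + d) / 3 := by linarith
  have hm : (2 * c + d) / 3 < (c + 2 * d) / 3 := by linarith
  have hr : (c + 2 * d) / 3 < d := by linarith
  rcases hY with hY | hY
  · exact ⟨_, _, Y ∩ X, hc.trans_lt hl, hm, hr.trans_le hd, Set.inter_subset_left,
      hY.mono hl.le hr.le, Or.inl Set.inter_subset_right⟩
  · exact ⟨_, _, Y \ X, hc.trans_lt hl, hm, hr.trans_le hd, Set.sdiff_subset,
      hY.mono hl.le hr.le, Or.inr Set.disjoint_sdiff_left⟩

/-- The fusion sequence of intervals and dense sets deciding each `X n`. -/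
theorem exists_fusion_sequence (X : ℕ → Set Q01) :
    ∃ (a b : ℕ → ℝ) (Y : ℕ → Set Q01), a 0 = 0 ∧ b 0 = 1 ∧ StrictMono a ∧ StrictAnti b ∧
      (∀ n, a n < b n) ∧ Antitone Y ∧ (∀ n, DenseBetween (a n) (b n) (Y n)) ∧
      ∀ n, Y (n + 1) ⊆ X n ∨ Disjoint (Y (n + 1)) (X n) := by
  let T := {p : ℝ × ℝ × Set Q01 // p.1 < p.2.1 ∧ DenseBetween p.1 p.2.1 p.2.2}
  have step : ∀ (n : ℕ) (p : T), ∃ p' : T, p.1.1 < p'.1.1 ∧ p'.1.2.1 < p.1.2.1 ∧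
      p'.1.2.2 ⊆ p.1.2.2 ∧ (p'.1.2.2 ⊆ X n ∨ Disjoint p'.1.2.2 (X n)) := by
    rintro n ⟨⟨a, b, Y⟩, hab, hY⟩
    obtain ⟨a', b', Y', ha, hab', hb, hsub, hY', hX⟩ := hY.exists_step hab (X n)
    exact ⟨⟨⟨a', b', Y'⟩, hab', hY'⟩, ha, hb, hsub, hX⟩
  choose next hnext using step
  let s : ℕ → T := fun n => Nat.rec ⟨(0, 1, Set.univ), one_pos, denseBetween_univ⟩ next n
  have hs : ∀ n, s (n + 1) = next n (s n) := fun _ => rfl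
  refine ⟨fun n => (s n).1.1, fun n => (s n).1.2.1, fun n => (s n).1.2.2, rfl, rfl,
    strictMono_nat_of_lt_succ fun n => (hnext n (s n)).1,
    strictAnti_nat_of_succ_lt fun n => (hnext n (s n)).2.1,
    fun n => (s n).2.1, antitone_nat_of_succ_le fun n => (hnext n (s n)).2.2.1,
    fun n => (s n).2.2, fun n => (hnext n (s n)).2.2.2⟩

/-- Points of a decreasing sequence of sets, each dense around `x`, can be chosen one in each
annulus around `x` so that they eventually lie in every set of the sequence. -/
theorem exists_points_in_annuli {a b : ℕ → ℝ} {Y : ℕ → Set Q01} {α : ℕ → ℝ} {x : ℝ}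
    (hα : memS α) (hY : Antitone Y) (hd : ∀ n, DenseBetween (a n) (b n) (Y n))
    (hx : ∀ n, a n < x ∧ x < b n) :
    ∃ (k₀ : ℕ) (q : ℕ → Q01),
      (∀ j, α (k₀ + j + 1) ≤ |qr (q j) - x| ∧ |qr (q j) - x| < α (k₀ + j)) ∧
      ∀ n, ∀ᶠ j in atTop, q j ∈ Y n := by
  classical
  obtain ⟨hpos, -, hanti, hlim⟩ := hα
  have hev : ∀ n, ∀ᶠ k in atTop, x + α k < b n := by
    intro n
    filter_upwards [hlim.eventually (gt_mem_nhds (sub_pos.2 (hx n).2))] with k hk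
    linarith
  obtain ⟨k₀, hk₀⟩ := eventually_atTop.1 (hev 0)
  let N : ℕ → ℕ := fun j => Nat.findGreatest (fun n => x + α (k₀ + j) < b n) j
  have hN : ∀ j, x + α (k₀ + j) < b (N j) := fun j =>
    Nat.findGreatest_spec (P := fun n => x + α (k₀ + j) < b n) (Nat.zero_le j)
      (hk₀ _ (Nat.le_add_right _ _))
  have hex : ∀ j, ∃ q ∈ Y (N j), x + α (k₀ + j + 1) < qr q ∧ qr q < x + α (k₀ + j) := by
    intro j
    refine hd (N j) _ _ ?_ ?_ (hN j).le
    · linarith [(hx (N j)).1, hpos (k₀ + j + 1)]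
    · linarith [hanti (Nat.lt_succ_self (k₀ + j))]
  choose q hqY hql hqr using hex
  refine ⟨k₀, q, fun j => ?_, fun n => ?_⟩
  · rw [abs_of_nonneg (by linarith [hql j, hpos (k₀ + j + 1)])]
    exact ⟨by linarith [hql j], by linarith [hqr j]⟩
  · obtain ⟨K, hK⟩ := eventually_atTop.1 (hev n)
    filter_upwards [eventually_ge_atTop n, eventually_ge_atTop K] with j hn hKj
    exact hY (Nat.le_findGreatest hn (hK _ (hKj.trans (Nat.le_add_left _ _)))) (hqY j)

/-- Only finitely many values of a sequence violate a property that holds eventually. -/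
theorem finite_range_of_eventually_not {β : Type*} {q : ℕ → β} {P : β → Prop}
    (h : ∀ᶠ j in atTop, ¬ P (q j)) : {y ∈ Set.range q | P y}.Finite := by
  have hfin : {j | P (q j)}.Finite := by
    simpa [← Nat.cofinite_eq_atTop, eventually_cofinite] using h
  refine (hfin.image q).subset ?_
  rintro _ ⟨⟨j, rfl⟩, hj⟩
  exact ⟨j, hj, rfl⟩

theorem fusion_construction (X : ℕ → Set Q01) (α : ℕ → ℝ) (hα : memS α) :
    ∃ x ∈ Set.Icc (0 : ℝ) 1, ∃ Y : Set Q01, Y.Infinite ∧ ConvTo Y x ∧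
      (∀ n, (Y ∩ X n).Finite ∨ (Y \ X n).Finite) ∧
      ∃ k₀ : ℕ, ∀ k ≥ k₀,
        ∃ q ∈ Y, α (k + 1) ≤ |qr q - x| ∧ |qr q - x| < α k := by
  obtain ⟨a, b, Y, ha0, hb0, ha, hb, hab, hYanti, hYd, hYX⟩ := exists_fusion_sequence X
  have hmem := ciSup_mem_iInter_Icc_of_antitone_Icc (f := a) (g := b)
    (fun m n hmn => Set.Icc_subset_Icc (ha.monotone hmn) (hb.antitone hmn)) fun n => (hab n).le
  set x := ⨆ n, a n
  rw [Set.mem_iInter] at hmem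
  have hx : ∀ n, a n < x ∧ x < b n := fun n =>
    ⟨(ha n.lt_succ_self).trans_le (hmem (n + 1)).1, (hmem (n + 1)).2.trans_lt (hb n.lt_succ_self)⟩
  obtain ⟨k₀, q, hq, hqY⟩ := exists_points_in_annuli hα hYanti hYd hx
  have hdist : StrictAnti fun j => |qr (q j) - x| :=
    strictAnti_nat_of_succ_lt fun j => (hq (j + 1)).2.trans_le (hq j).1
  have hinj : Function.Injective q := fun i j hij =>
    hdist.injective (congrArg (fun p => |qr p - x|) hij)
  refine ⟨x, by simpa [ha0, hb0] using hmem 0, Set.range q, Set.infinite_range_of_injective hinj,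
    fun ε hε => finite_range_of_eventually_not ?_, fun n => ?_, k₀, fun k hk => ?_⟩
  · have hlim : Tendsto (fun j => α (k₀ + j)) atTop (𝓝 0) :=
      hα.2.2.2.comp (tendsto_atTop_mono (fun j => Nat.le_add_left j k₀) tendsto_id)
    filter_upwards [hlim.eventually (gt_mem_nhds hε)] with j hj
    exact not_le.2 ((hq j).2.trans hj)
  · rcases hYX n with h | h
    · right
      refine finite_range_of_eventually_not (P := fun p => p ∉ X n) ?_
      filter_upwards [hqY (n + 1)] with j hj
      exact not_not.2 (h hj)
    · left
      refine finite_range_of_eventually_not (P := fun p => p ∈ X n) ?_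
      filter_upwards [hqY (n + 1)] with j hj
      exact Set.disjoint_left.1 h hj
  · obtain ⟨j, rfl⟩ := Nat.exists_eq_add_of_le hk
    exact ⟨q j, Set.mem_range_self j, hq j⟩
end

section
/- There exists a Borel (in fact Σ⁰₆) ideal I on a countable set such that I cannot be extended to any P⁺-ideal (equivalently, to any Σ⁰₂ ideal) and conv ≰_K I; namely I = conv(I_d,(1/2^{n+1})) is such an ideal. -/
open Filter Topology Set

/-! ### Finite-level Borel classes -/

section Sigma0

variable {X Y : Type*} [TopologicalSpace X] [TopologicalSpace Y]

lemma IsClopen.isSigma0 {S : Set X} (hS : IsClopen S) (n : ℕ) : IsSigma0 (n + 1) S := by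
  induction n generalizing S with
  | zero => exact hS.isOpen
  | succ n ih => exact ⟨fun _ => S, fun _ => ih hS.compl, (iUnion_const S).symm⟩

lemma IsSigma0.of_compl {S : Set X} {n : ℕ} (hS : IsSigma0 (n + 1) Sᶜ) : IsSigma0 (n + 2) S :=
  ⟨fun _ => S, fun _ => hS, (iUnion_const S).symm⟩

lemma IsSigma0.compl_succ {S : Set X} {n : ℕ} (hS : IsSigma0 (n + 1) S) :
    IsSigma0 (n + 2) Sᶜ :=
  IsSigma0.of_compl (by rwa [compl_compl])

lemma IsSigma0.succ [TopologicalSpace.MetrizableSpace X] {S : Set X} {n : ℕ}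
    (hS : IsSigma0 (n + 1) S) : IsSigma0 (n + 2) S := by
  induction n generalizing S with
  | zero =>
    let _ := TopologicalSpace.metrizableSpaceMetric X
    obtain ⟨F, hF, -, hFS, -⟩ := IsOpen.exists_iUnion_isClosed (U := S) hS
    exact ⟨F, fun k => (hF k).isOpen_compl, hFS.symm⟩
  | succ n ih =>
    obtain ⟨f, hf, rfl⟩ := hS
    exact ⟨f, fun k => ih (hf k), rfl⟩

lemma IsSigma0.iUnion {ι : Type*} [Countable ι] {n : ℕ} {S : ι → Set X}
    (hS : ∀ i, IsSigma0 (n + 1) (S i)) : IsSigma0 (n + 1) (⋃ i, S i) := by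
  rcases isEmpty_or_nonempty ι with hι | hι
  · rw [iUnion_of_empty]
    exact isClopen_empty.isSigma0 n
  cases n with
  | zero => exact isOpen_iUnion hS
  | succ n =>
    choose f hf hfS using hS
    obtain ⟨e, he⟩ := exists_surjective_nat (ι × ℕ)
    refine ⟨fun k => f (e k).1 (e k).2, fun k => hf _ _, ?_⟩
    rw [he.iUnion_comp (fun p : ι × ℕ => f p.1 p.2), iUnion_prod']
    exact iUnion_congr hfS

lemma IsSigma0.union {n : ℕ} {S T : Set X} (hS : IsSigma0 (n + 1) S) (hT : IsSigma0 (n + 1) T) :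
    IsSigma0 (n + 1) (S ∪ T) := by
  rw [union_eq_iUnion]
  exact IsSigma0.iUnion (Bool.forall_bool.2 ⟨hT, hS⟩)

lemma IsSigma0.inter {n : ℕ} {S T : Set X} (hS : IsSigma0 (n + 1) S) (hT : IsSigma0 (n + 1) T) :
    IsSigma0 (n + 1) (S ∩ T) := by
  cases n with
  | zero => exact IsOpen.inter hS hT
  | succ n =>
    obtain ⟨f, hf, rfl⟩ := hS
    obtain ⟨g, hg, rfl⟩ := hT
    rw [iUnion_inter]
    refine IsSigma0.iUnion fun i => ?_
    rw [inter_iUnion]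
    refine IsSigma0.iUnion fun j => IsSigma0.of_compl ?_
    rw [compl_inter]
    exact (hf i).union (hg j)

lemma IsSigma0.biInter_finset {ι : Type*} {n : ℕ} {S : ι → Set X}
    (hS : ∀ i, IsSigma0 (n + 1) (S i)) (G : Finset ι) : IsSigma0 (n + 1) (⋂ i ∈ G, S i) := by
  classical
  induction G using Finset.induction_on with
  | empty => simpa using isClopen_univ.isSigma0 n
  | insert a G _ ih =>
    rw [Finset.set_biInter_insert]
    exact (hS a).inter ih

lemma IsSigma0.preimage {n : ℕ} {S : Set Y} (hS : IsSigma0 (n + 1) S) {g : X → Y}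
    (hg : Continuous g) : IsSigma0 (n + 1) (g ⁻¹' S) := by
  induction n generalizing S with
  | zero => exact IsOpen.preimage hg hS
  | succ n ih =>
    obtain ⟨f, hf, rfl⟩ := hS
    exact ⟨fun k => g ⁻¹' f k, fun k => ih (hf k), preimage_iUnion⟩

end Sigma0

/-! ### The density ideal -/

lemma IsIdeal.mono {X : Type*} {I : Set (Set X)} (hI : IsIdeal I) {A B : Set X} (hA : A ∈ I)
    (h : B ⊆ A) : B ∈ I :=
  hI.1 A hA B h

lemma IsIdeal.union {X : Type*} {I : Set (Set X)} (hI : IsIdeal I) {A B : Set X} (hA : A ∈ I)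
    (hB : B ∈ I) : A ∪ B ∈ I :=
  hI.2.1 A hA B hB

lemma ncard_inter_Iic_le_of_subset {A B : Set ℕ} (h : A ⊆ B) (n : ℕ) :
    (A ∩ Iic n).ncard ≤ (B ∩ Iic n).ncard :=
  ncard_le_ncard (inter_subset_inter_left _ h) ((finite_Iic n).inter_of_right _)

lemma mem_densityZero_iff {A : Set ℕ} :
    A ∈ densityZero ↔
      ∀ j : ℕ, ∃ N : ℕ, ∀ n : ℕ, N ≤ n → ¬ ((n + 1 : ℝ) / (j + 1) < (A ∩ Iic n).ncard) := by
  have key : ∀ n j : ℕ, (n + 1 : ℝ) / (j + 1) < (A ∩ Iic n).ncard ↔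
      1 / (j + 1 : ℝ) < ((A ∩ Iic n).ncard : ℝ) / (n + 1) := fun n j => by
    rw [div_lt_div_iff₀ (by positivity) (by positivity), div_lt_iff₀ (by positivity), one_mul]
  simp only [key, not_lt]
  have hnn : ∀ n : ℕ, 0 ≤ ((A ∩ Iic n).ncard : ℝ) / (n + 1) := fun n => by positivity
  constructor
  · intro h j
    obtain ⟨N, hN⟩ := eventually_atTop.1
      ((tendsto_order.1 h).2 (1 / (j + 1 : ℝ)) (by positivity))
    exact ⟨N, fun n hn => (hN n hn).le⟩
  · intro h
    refine tendsto_order.2 ⟨fun a ha => Eventually.of_forall fun n => ha.trans_le (hnn n),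
      fun a ha => ?_⟩
    obtain ⟨j, hj⟩ := exists_nat_one_div_lt ha
    obtain ⟨N, hN⟩ := h j
    exact eventually_atTop.2 ⟨N, fun n hn => (hN n hn).trans_lt hj⟩

lemma isIdeal_densityZero : IsIdeal densityZero := by
  refine ⟨fun A hA B hBA => ?_, fun A hA B hB => ?_, fun A hA => ?_, fun h => ?_⟩
  · refine squeeze_zero (fun n => by positivity) (fun n => ?_) hA
    refine div_le_div_of_nonneg_right (Nat.cast_le.2 ?_) (by positivity)
    exact ncard_inter_Iic_le_of_subset hBA n
  · have hsum := Tendsto.add hA hB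
    rw [add_zero] at hsum
    refine squeeze_zero (fun n => by positivity) (fun n => ?_) hsum
    rw [← add_div, union_inter_distrib_right]
    gcongr
    exact_mod_cast ncard_union_le _ _
  · refine squeeze_zero (fun n => by positivity) (fun n => ?_)
      (tendsto_const_div_atTop_nhds_zero_nat (A.ncard : ℝ) |>.comp (tendsto_add_atTop_nat 1))
    simp only [Function.comp_apply, Nat.cast_add, Nat.cast_one]
    refine div_le_div_of_nonneg_right (Nat.cast_le.2 ?_) (by positivity)
    exact ncard_le_ncard inter_subset_left hA
  · have h1 : Tendsto (fun _ : ℕ => (1 : ℝ)) atTop (𝓝 0) := by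
      refine Tendsto.congr (fun n => ?_) h
      rw [univ_inter, ← Finset.coe_Iic, ncard_coe_finset, Nat.card_Iic]
      push_cast
      exact div_self (by positivity)
    exact one_ne_zero (tendsto_nhds_unique tendsto_const_nhds h1)

lemma ncard_modEq_inter_Iic_le {m : ℕ} (c n : ℕ) :
    ({i : ℕ | i % m = c} ∩ Iic n).ncard ≤ n / m + 1 := by
  have : (Iic (n / m)).ncard = n / m + 1 := by
    rw [← Finset.coe_Iic, ncard_coe_finset, Nat.card_Iic]
  rw [← this]
  refine ncard_le_ncard_of_injOn (fun i => i / m) (fun i hi => Nat.div_le_div_right hi.2) ?_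
    (finite_Iic _)
  intro i hi j hj hij
  have hi' := hi.1
  have hj' := hj.1
  simp only [mem_ofPred_eq] at hi' hj' hij
  rw [← Nat.div_add_mod i m, ← Nat.div_add_mod j m, hi', hj', hij]

lemma exists_finite_mod_ne {A : Set ℕ} {r : ℕ → Bool}
    (h : ∀ k, {n ∈ A | n.testBit k ≠ r k}.Finite) (k : ℕ) :
    ∃ c, {n ∈ A | n % 2 ^ k ≠ c}.Finite := by
  induction k with
  | zero => exact ⟨0, by simp [Nat.mod_one]⟩
  | succ k ih =>
    obtain ⟨c, hc⟩ := ih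
    refine ⟨c + 2 ^ k * (r k).toNat, (hc.union (h k)).subset ?_⟩
    rintro n ⟨hn, hne⟩
    by_contra hcon
    simp only [mem_union, mem_ofPred_eq, not_or, not_and, not_not] at hcon
    refine hne ?_
    rw [Nat.mod_pow_succ, ← Nat.toNat_testBit, hcon.1 hn, hcon.2 hn]

lemma mem_densityZero_of_testBit {A : Set ℕ} {r : ℕ → Bool}
    (h : ∀ k, {n ∈ A | n.testBit k ≠ r k}.Finite) : A ∈ densityZero := by
  have hnn : ∀ n : ℕ, 0 ≤ ((A ∩ Iic n).ncard : ℝ) / (n + 1) := fun n => by positivity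
  refine tendsto_order.2 ⟨fun a ha => Eventually.of_forall fun n => ha.trans_le (hnn n),
    fun a ha => ?_⟩
  obtain ⟨k, hk⟩ := exists_pow_lt_of_lt_one ha (by norm_num : (1 / 2 : ℝ) < 1)
  obtain ⟨c, hc⟩ := exists_finite_mod_ne h k
  set F := {n ∈ A | n % 2 ^ k ≠ c}
  have hbound : ∀ n : ℕ, ((A ∩ Iic n).ncard : ℝ) / (n + 1) ≤
      (F.ncard + 1 : ℝ) / ((n + 1 : ℕ) : ℝ) + (1 / 2) ^ k := by
    intro n
    have h1 : (A ∩ Iic n).ncard ≤ F.ncard + (n / 2 ^ k + 1) := by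
      refine (ncard_le_ncard (t := F ∪ ({i : ℕ | i % 2 ^ k = c} ∩ Iic n)) ?_ ?_).trans
        ((ncard_union_le _ _).trans
          (Nat.add_le_add_left (ncard_modEq_inter_Iic_le c n) _))
      · rintro i ⟨hi, hin⟩
        by_cases hic : i % 2 ^ k = c
        · exact Or.inr ⟨hic, hin⟩
        · exact Or.inl ⟨hi, hic⟩
      · exact hc.union ((finite_Iic n).inter_of_right _)
    have h2 : ((n / 2 ^ k : ℕ) : ℝ) ≤ (n + 1) * (1 / 2) ^ k := by
      refine Nat.cast_div_le.trans ?_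
      rw [one_div, inv_pow, ← div_eq_mul_inv]
      push_cast
      gcongr
      linarith
    have h3 : ((A ∩ Iic n).ncard : ℝ) ≤ F.ncard + ((n / 2 ^ k : ℕ) + 1) := by exact_mod_cast h1
    push_cast
    rw [div_le_iff₀ (by positivity), add_mul, div_mul_cancel₀ _ (by positivity)]
    linarith
  have hlim : Tendsto (fun n : ℕ => (F.ncard + 1 : ℝ) / ((n + 1 : ℕ) : ℝ) + (1 / 2) ^ k) atTop
      (𝓝 ((1 / 2) ^ k)) := by
    simpa using ((tendsto_const_div_atTop_nhds_zero_nat (F.ncard + 1 : ℝ)).comp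
      (tendsto_add_atTop_nat 1)).add_const ((1 / 2 : ℝ) ^ k)
  filter_upwards [(tendsto_order.1 hlim).2 a hk] with n hn using (hbound n).trans_lt hn

/-! ### Convergent and quickly convergent sets -/

lemma ConvTo.mono {S T : Set Q01} {x : ℝ} (hS : ConvTo S x) (h : T ⊆ S) : ConvTo T x :=
  fun ε hε => (hS ε hε).subset fun _ hq => ⟨h hq.1, hq.2⟩

lemma ConvTo.union {S T : Set Q01} {x : ℝ} (hS : ConvTo S x) (hT : ConvTo T x) :
    ConvTo (S ∪ T) x :=
  fun ε hε => ((hS ε hε).union (hT ε hε)).subset fun _ hq =>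
    hq.1.imp (fun h => ⟨h, hq.2⟩) fun h => ⟨h, hq.2⟩

lemma Set.Finite.convTo {S : Set Q01} (hS : S.Finite) (x : ℝ) : ConvTo S x :=
  fun _ _ => hS.subset fun _ hq => hq.1

lemma ConvTo.finite_of_ne {S : Set Q01} {x y : ℝ} (hx : ConvTo S x) (hy : ConvTo S y)
    (hxy : x ≠ y) : S.Finite := by
  have hpos : 0 < |x - y| / 2 := half_pos (abs_pos.2 (sub_ne_zero.2 hxy))
  refine ((hx _ hpos).union (hy _ hpos)).subset fun q hq => ?_
  by_contra hcon
  simp only [mem_union, mem_ofPred_eq, not_or, not_and, not_le] at hcon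
  have h1 := hcon.1 hq
  have h2 := hcon.2 hq
  have h3 := abs_sub_le x (qr q) y
  rw [abs_sub_comm x (qr q)] at h3
  linarith

lemma qr_mem_Icc (q : Q01) : qr q ∈ Icc (0 : ℝ) 1 :=
  ⟨Rat.cast_nonneg.2 q.2.1, Rat.cast_one (α := ℝ) ▸ Rat.cast_le.2 q.2.2⟩

lemma exists_convTo_iff {S : Set Q01} :
    (∃ x ∈ Icc (0 : ℝ) 1, ConvTo S x) ↔
      ∀ p p' : ℚ, p < p' → {q ∈ S | qr q ≤ p}.Finite ∨ {q ∈ S | (p' : ℝ) ≤ qr q}.Finite := by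
  constructor
  · rintro ⟨x, -, hx⟩ p p' hpp
    rcases lt_or_ge (p : ℝ) x with hp | hp
    · refine Or.inl ((hx (x - p) (sub_pos.2 hp)).subset fun q hq => ⟨hq.1, ?_⟩)
      exact le_abs.2 (Or.inr (by linarith [hq.2]))
    · have hp' : x < p' := hp.trans_lt (by exact_mod_cast hpp)
      refine Or.inr ((hx (p' - x) (sub_pos.2 hp')).subset fun q hq => ⟨hq.1, ?_⟩)
      exact le_abs.2 (Or.inl (by linarith [hq.2]))
  intro h
  set L : Set ℝ := {r | r ≤ 1 ∧ {q ∈ S | qr q ≤ r}.Finite}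
  have hLneg : ∀ r < 0, r ∈ L := fun r hr => by
    refine ⟨by linarith, finite_empty.subset fun q hq => ?_⟩
    exact absurd (hq.2.trans_lt hr) (not_lt.2 (qr_mem_Icc q).1)
  have hLbdd : BddAbove L := ⟨1, fun r hr => hr.1⟩
  have hLne : L.Nonempty := ⟨-1, hLneg _ (by norm_num)⟩
  refine ⟨sSup L, ⟨le_of_forall_lt fun r hr => ?_, csSup_le hLne fun r hr => hr.1⟩,
    fun ε hε => ?_⟩
  · exact (by linarith : r < r / 2).trans_le (le_csSup hLbdd (hLneg _ (by linarith)))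
  obtain ⟨r, hr, hxr⟩ := exists_lt_of_lt_csSup hLne (sub_lt_self (sSup L) hε)
  obtain ⟨p, hxp, hp⟩ := exists_rat_btwn (lt_add_of_pos_right (sSup L) hε)
  obtain ⟨p', hpp', hp'⟩ := exists_rat_btwn hp
  have hup : {q ∈ S | (p' : ℝ) ≤ qr q}.Finite := by
    rcases le_or_gt (p : ℝ) 1 with hp1 | hp1
    · refine (h p p' (by exact_mod_cast hpp')).resolve_left fun hfin => ?_
      exact absurd (le_csSup hLbdd (show (p : ℝ) ∈ L from ⟨hp1, hfin⟩)) (not_le.2 hxp)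
    · refine finite_empty.subset fun q hq => ?_
      exact absurd (hq.2.trans (qr_mem_Icc q).2) (not_le.2 (hp1.trans hpp'))
  refine (hr.2.union hup).subset fun q hq => ?_
  rcases le_abs.1 hq.2 with h1 | h1
  · exact Or.inr ⟨hq.1, by linarith⟩
  · exact Or.inl ⟨hq.1, by linarith⟩

lemma exists_convTo_of_cut {S : Set Q01}
    (h : ∀ p : ℚ, {q ∈ S | qr q ≤ p}.Finite ∨ {q ∈ S | ¬ qr q ≤ p}.Finite) :
    ∃ x ∈ Icc (0 : ℝ) 1, ConvTo S x :=
  exists_convTo_iff.2 fun p _ hpp => (h p).imp_right fun hfin => hfin.subset fun _ hq =>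
    ⟨hq.1, not_le.2 ((Rat.cast_lt.2 hpp).trans_le hq.2)⟩

lemma ConvTo.finite_inter_Icc {S : Set Q01} {x a b : ℝ} (h : ConvTo S x) (hx : x ∉ Icc a b) :
    (S ∩ {q | qr q ∈ Icc a b}).Finite := by
  rcases lt_or_ge x a with hxa | hxa
  · refine (h (a - x) (sub_pos.2 hxa)).subset fun q hq => ⟨hq.1, le_abs.2 (Or.inl ?_)⟩
    linarith [hq.2.1]
  · have hbx : b < x := lt_of_not_ge fun hxb => hx ⟨hxa, hxb⟩
    refine (h (x - b) (sub_pos.2 hbx)).subset fun q hq => ⟨hq.1, le_abs.2 (Or.inr ?_)⟩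
    linarith [hq.2.2]

/-- The index of the annulus `[α (n + 1), α n)` around `x` that contains `q`. -/
noncomputable def annulusIndex (α : ℕ → ℝ) (x : ℝ) (q : Q01) : ℕ :=
  sInf {n | α (n + 1) ≤ |qr q - x|}

/-- The indices of the annuli around `x` that meet `S`. -/
def annuliHit (α : ℕ → ℝ) (S : Set Q01) (x : ℝ) : Set ℕ :=
  {n : ℕ | ∃ q ∈ S, α (n + 1) ≤ |qr q - x| ∧ |qr q - x| < α n}

lemma annuliHit_mono {α : ℕ → ℝ} {S T : Set Q01} (h : S ⊆ T) (x : ℝ) :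
    annuliHit α S x ⊆ annuliHit α T x :=
  fun _ ⟨q, hq, hq'⟩ => ⟨q, h hq, hq'⟩

lemma annuliHit_subset_image {α : ℕ → ℝ} (hα : StrictAnti α) (S : Set Q01) (x : ℝ) :
    annuliHit α S x ⊆ annulusIndex α x '' S := by
  rintro n ⟨q, hq, h1, h2⟩
  refine ⟨q, hq, le_antisymm (Nat.sInf_le h1) (le_csInf ⟨n, h1⟩ fun m hm => ?_)⟩
  by_contra! hmn
  exact absurd (h2.trans_le (hα.antitone (Nat.succ_le_of_lt hmn))) (not_lt.2 hm)

section Quick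

variable {I : Set (Set ℕ)} {α : ℕ → ℝ} {S T : Set Q01} {x y : ℝ}

lemma IQuickTo.mono (hI : IsIdeal I) (hS : IQuickTo I α S x) (h : T ⊆ S) : IQuickTo I α T x :=
  ⟨hS.1.mono h, hI.mono hS.2 (annuliHit_mono h x)⟩

lemma IQuickTo.union (hI : IsIdeal I) (hS : IQuickTo I α S x) (hT : IQuickTo I α T x) :
    IQuickTo I α (S ∪ T) x := by
  refine ⟨hS.1.union hT.1, hI.mono (hI.union hS.2 hT.2) ?_⟩
  rintro n ⟨q, hq | hq, h⟩
  · exact Or.inl ⟨q, hq, h⟩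
  · exact Or.inr ⟨q, hq, h⟩

lemma iQuickTo_of_finite (hI : IsIdeal I) (hα : StrictAnti α) (hS : S.Finite) (x : ℝ) :
    IQuickTo I α S x :=
  ⟨hS.convTo x, hI.2.2.1 _ ((hS.image _).subset (annuliHit_subset_image hα S x))⟩

lemma iQuickTo_biUnion (hI : IsIdeal I) (hα : StrictAnti α) {ι : Type*} {F : Finset ι}
    {S : ι → Set Q01} (h : ∀ i ∈ F, IQuickTo I α (S i) x) : IQuickTo I α (⋃ i ∈ F, S i) x := by
  classical
  induction F using Finset.induction_on with
  | empty => simpa using iQuickTo_of_finite hI hα finite_empty x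
  | insert a F _ ih =>
    rw [Finset.set_biUnion_insert]
    exact (h a (Finset.mem_insert_self a F)).union hI
      (ih fun i hi => h i (Finset.mem_insert_of_mem hi))

lemma IQuickTo.of_convTo_subset (hI : IsIdeal I) (hα : StrictAnti α) (hS : IQuickTo I α S y)
    (hT : ConvTo T x) (h : T ⊆ S) : IQuickTo I α T x := by
  rcases eq_or_ne x y with rfl | hxy
  · exact hS.mono hI h
  · exact iQuickTo_of_finite hI hα (hT.finite_of_ne (hS.1.mono h) hxy) x

lemma iQuickTo_of_mem_convQI (hI : IsIdeal I) (hα : StrictAnti α) (hS : S ∈ convQI I α)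
    (hx : ConvTo S x) : IQuickTo I α S x := by
  obtain ⟨F, hF, hSF⟩ := hS
  refine (iQuickTo_biUnion (S := fun T => S ∩ T) hI hα fun T hT => ?_).mono hI
    (T := S) (S := ⋃ T ∈ F, S ∩ T) fun q hq => ?_
  · obtain ⟨y, -, hy⟩ := hF T hT
    exact hy.of_convTo_subset hI hα (hx.mono inter_subset_left) inter_subset_right
  · obtain ⟨T, hT, hqT⟩ := hSF hq
    exact mem_biUnion hT ⟨hq, hqT⟩

end Quick

/-! ### Non-extendability to a P⁺-ideal -/

lemma exists_seq_rel {β : Type*} {R : ℕ → β → β → Prop} (h : ∀ n a, ∃ b, R n a b) (a : β) :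
    ∃ s : ℕ → β, s 0 = a ∧ ∀ n, R n (s n) (s (n + 1)) := by
  choose g hg using h
  exact ⟨fun n => Nat.rec a g n, rfl, fun n => hg _ _⟩

lemma IsPPlus.exists_homogeneous {X : Type*} {J : Set (Set X)} (hJ : IsIdeal J) (hP : IsPPlus J)
    {A : Set X} (hA : A ∉ J) (P : ℕ → X → Bool) :
    ∃ B ⊆ A, B ∉ J ∧ ∃ r : ℕ → Bool, ∀ k, {q ∈ B | P k q ≠ r k}.Finite := by
  have step : ∀ (n : ℕ) (S : {S : Set X // S ∉ J}), ∃ T : {S : Set X // S ∉ J},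
      T.1 ⊆ S.1 ∧ ∃ b, ∀ q ∈ T.1, P n q = b := by
    rintro n ⟨S, hS⟩
    by_contra! hcon
    have hmem : ∀ b, {q ∈ S | P n q = b} ∈ J := fun b => by
      by_contra hb
      obtain ⟨q, hq, hqb⟩ := hcon ⟨_, hb⟩ (fun q hq => hq.1) b
      exact hqb hq.2
    refine hS (hJ.mono (hJ.union (hmem true) (hmem false)) fun q hq => ?_)
    cases hb : P n q
    · exact Or.inr ⟨hq, hb⟩
    · exact Or.inl ⟨hq, hb⟩
  obtain ⟨s, hs0, hs⟩ := exists_seq_rel step ⟨A, hA⟩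
  obtain ⟨B, hB, hBs⟩ := hP (fun n => (s n).1) (fun n => (hs n).1) fun n => (s n).2
  choose r hr using fun n => (hs n).2
  refine ⟨B ∩ A, inter_subset_right, fun hBA => hB ?_, r, fun k => (hBs (k + 1)).subset ?_⟩
  · have h0 := hBs 0
    simp only [hs0] at h0
    exact hJ.mono (hJ.union hBA (hJ.2.2.1 _ h0)) (inter_union_sdiff B A).ge
  · exact fun q hq => ⟨hq.1.1, fun hqs => hq.2 (hr k q hqs)⟩

theorem not_extendable_convQI {α : ℕ → ℝ} (hα : memS α) :
    ¬ ∃ J : Set (Set Q01), IsIdeal J ∧ IsPPlus J ∧ convQI densityZero α ⊆ J := by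
  classical
  rintro ⟨J, hJ, hP, hsub⟩
  obtain ⟨e, he⟩ := exists_surjective_nat ℚ
  obtain ⟨B, -, hB, r, hr⟩ :=
    hP.exists_homogeneous hJ hJ.2.2.2 fun k q => decide (qr q ≤ e k)
  obtain ⟨x, hx, hBx⟩ : ∃ x ∈ Icc (0 : ℝ) 1, ConvTo B x := by
    refine exists_convTo_of_cut fun p => ?_
    obtain ⟨k, rfl⟩ := he p
    have hk := hr k
    cases hb : r k
    · left; simpa [hb] using hk
    · right; simpa [hb] using hk
  obtain ⟨C, hCB, hC, t, ht⟩ :=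
    hP.exists_homogeneous hJ hB fun k q => (annulusIndex α x q).testBit k
  refine hC (hsub ⟨{C}, ?_, by simp⟩)
  simp only [Finset.mem_singleton, forall_eq]
  refine ⟨x, hx, hBx.mono hCB, isIdeal_densityZero.mono (mem_densityZero_of_testBit (r := t)
    (A := annulusIndex α x '' C) fun k => ?_) (annuliHit_subset_image hα.2.2.1 C x)⟩
  refine ((ht k).image (annulusIndex α x)).subset ?_
  rintro _ ⟨⟨q, hq, rfl⟩, hne⟩
  exact ⟨q, ⟨hq, hne⟩, rfl⟩

/-! ### The ideal is not Katětov above `conv` -/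

/-- `D` is dense in the real interval `[a, b]`. -/
def DenseOn (D : Set Q01) (a b : ℝ) : Prop :=
  ∀ c d : ℝ, a ≤ c → c < d → d ≤ b → ∃ q ∈ D, c < qr q ∧ qr q < d

lemma denseOn_univ : DenseOn univ 0 1 := fun c d hc hcd hd => by
  obtain ⟨p, hcp, hpd⟩ := exists_rat_btwn hcd
  refine ⟨⟨p, ?_, ?_⟩, mem_univ _, hcp, hpd⟩
  · exact_mod_cast (hc.trans_lt hcp).le
  · exact_mod_cast (hpd.trans_le hd).le

lemma DenseOn.exists_split {D : Set Q01} {a b : ℝ} (h : DenseOn D a b) (hab : a < b)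
    (P : Q01 → Bool) :
    ∃ a' b', a < a' ∧ a' < b' ∧ b' < b ∧ ∃ t, DenseOn {q ∈ D | P q = t} a' b' := by
  by_cases hT : DenseOn {q ∈ D | P q = true} ((2 * a + b) / 3) ((a + 2 * b) / 3)
  · exact ⟨_, _, by linarith, by linarith, by linarith, true, hT⟩
  · simp only [DenseOn, not_forall, not_exists, not_and] at hT
    obtain ⟨c, d, hc, hcd, hd, hno⟩ := hT
    refine ⟨c, d, by linarith, hcd, by linarith, false, fun u v hu huv hv => ?_⟩
    obtain ⟨q, hq, hq1, hq2⟩ := h u v (by linarith) huv (by linarith)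
    refine ⟨q, ⟨hq, ?_⟩, hq1, hq2⟩
    by_contra hne
    exact hno q ⟨hq, by simpa using hne⟩ (hu.trans_lt hq1) (hq2.trans_le hv)

/-- For any countably many predicates there is a set meeting almost every annulus around some
point that converges to that point and on which every predicate is almost constant. -/
lemma exists_convTo_homogeneous {α : ℕ → ℝ} (hα : memS α) (P : ℕ → Q01 → Bool) :
    ∃ x, ∃ B : Set Q01, ConvTo B x ∧ (∃ m, Ici m ⊆ annuliHit α B x) ∧
      ∃ r : ℕ → Bool, ∀ k, {q ∈ B | P k q ≠ r k}.Finite := by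
  obtain ⟨-, -, hanti, hlim⟩ := hα
  have step : ∀ (n : ℕ) (S : {S : Set Q01 × ℝ × ℝ // S.2.1 < S.2.2 ∧ DenseOn S.1 S.2.1 S.2.2}),
      ∃ T : {S : Set Q01 × ℝ × ℝ // S.2.1 < S.2.2 ∧ DenseOn S.1 S.2.1 S.2.2},
        S.1.2.1 < T.1.2.1 ∧ T.1.2.2 < S.1.2.2 ∧ T.1.1 ⊆ S.1.1 ∧
          ∃ b, ∀ q ∈ T.1.1, P n q = b := by
    rintro n ⟨⟨D, a, b⟩, hab, hD⟩
    obtain ⟨a', b', h1, h2, h3, t, ht⟩ := hD.exists_split hab (P n)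
    exact ⟨⟨⟨_, a', b'⟩, h2, ht⟩, h1, h3, fun q hq => hq.1, t, fun q hq => hq.2⟩
  obtain ⟨s, -, hs⟩ := exists_seq_rel step ⟨⟨univ, 0, 1⟩, one_pos, denseOn_univ⟩
  set D : ℕ → Set Q01 := fun k => (s k).1.1
  set a : ℕ → ℝ := fun k => (s k).1.2.1
  set b : ℕ → ℝ := fun k => (s k).1.2.2
  have ha : StrictMono a := strictMono_nat_of_lt_succ fun k => (hs k).1
  have hb : StrictAnti b := strictAnti_nat_of_succ_lt fun k => (hs k).2.1
  have hD : Antitone D := antitone_nat_of_succ_le fun k => (hs k).2.2.1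
  have hdense : ∀ k, DenseOn (D k) (a k) (b k) := fun k => (s k).2.2
  choose r hr using fun k => (hs k).2.2.2
  set x : ℝ := ⨆ k, a k
  have hxmem : x ∈ ⋂ k, Icc (a k) (b k) :=
    ha.monotone.ciSup_mem_iInter_Icc_of_antitone hb.antitone fun k => (s k).2.1.le
  have hax : ∀ k, a k ≤ x := fun k => (mem_iInter.1 hxmem k).1
  have hxb : ∀ k, x < b k := fun k => (mem_iInter.1 hxmem (k + 1)).2.trans_lt (hb k.lt_succ_self)
  have hαpos : ∀ n, 0 < α n := fun n => hanti.antitone.le_of_tendsto hlim (n + 1) |>.trans_lt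
    (hanti n.lt_succ_self)
  have hpick : ∀ n, ∃ q : Q01, ∀ k ≤ n, x + α n ≤ b k →
      q ∈ D k ∧ x + α (n + 1) < qr q ∧ qr q < x + α n := by
    classical
    intro n
    by_cases h0 : x + α n ≤ b 0
    · set K := Nat.findGreatest (fun k => x + α n ≤ b k) n
      have hK : x + α n ≤ b K := Nat.findGreatest_spec (P := fun k => x + α n ≤ b k)
        (Nat.zero_le n) h0
      obtain ⟨q, hq, hq1, hq2⟩ := hdense K (x + α (n + 1)) (x + α n)
        (by linarith [hax K, hαpos (n + 1)]) (by linarith [hanti n.lt_succ_self]) hK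
      exact ⟨q, fun k hk hkb => ⟨hD (Nat.le_findGreatest hk hkb) hq, hq1, hq2⟩⟩
    · exact ⟨⟨0, by simp⟩, fun k _ hk => absurd (hk.trans (hb.antitone k.zero_le)) h0⟩
  choose q hq using hpick
  have hev : ∀ k, ∃ m, ∀ n ≥ m, q n ∈ D k ∧ x + α (n + 1) < qr (q n) ∧ qr (q n) < x + α n := by
    intro k
    obtain ⟨m, hm⟩ := eventually_atTop.1 ((tendsto_order.1 hlim).2 (b k - x) (sub_pos.2 (hxb k)))
    refine ⟨max m k, fun n hn => hq n k (le_of_max_le_right hn) ?_⟩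
    linarith [hm n (le_of_max_le_left hn)]
  obtain ⟨m₀, hm₀⟩ := hev 0
  have habs : ∀ n ≥ m₀, |qr (q n) - x| = qr (q n) - x := fun n hn =>
    abs_of_nonneg (by linarith [(hm₀ n hn).2.1, hαpos (n + 1)])
  refine ⟨x, range q, fun ε hε => ?_, ⟨m₀, fun n hn => ⟨q n, mem_range_self n, ?_⟩⟩, r,
    fun k => ?_⟩
  · obtain ⟨m, hm⟩ := eventually_atTop.1 ((tendsto_order.1 hlim).2 ε hε)
    refine ((finite_Iio (max m m₀)).image q).subset ?_
    rintro _ ⟨⟨n, rfl⟩, hn⟩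
    refine ⟨n, mem_Iio.2 (lt_of_not_ge fun hge => ?_), rfl⟩
    have hn₀ := le_of_max_le_right hge
    rw [habs n hn₀] at hn
    linarith [hm n (le_of_max_le_left hge), (hm₀ n hn₀).2.2]
  · rw [habs n hn]
    have := hm₀ n hn
    exact ⟨by linarith, by linarith⟩
  · obtain ⟨m, hm⟩ := hev (k + 1)
    refine ((finite_Iio m).image q).subset ?_
    rintro _ ⟨⟨n, rfl⟩, hn⟩
    exact ⟨n, mem_Iio.2 <| lt_of_not_ge fun hge => hn (hr k _ (hm n hge).1), rfl⟩

theorem not_katLE_convQI {α : ℕ → ℝ} (hα : memS α) :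
    ¬ KatLE convIdeal (convQI densityZero α) := by
  classical
  rintro ⟨f, hf⟩
  obtain ⟨e, he⟩ := exists_surjective_nat ℚ
  obtain ⟨x, B, hBx, ⟨m, hm⟩, r, hr⟩ :=
    exists_convTo_homogeneous hα fun k q => decide (qr (f q) ≤ e k)
  obtain ⟨y, hy, hfy⟩ : ∃ y ∈ Icc (0 : ℝ) 1, ConvTo (f '' B) y := by
    refine exists_convTo_of_cut fun p => ?_
    obtain ⟨k, rfl⟩ := he p
    have hk := (hr k).image f
    cases hb : r k
    · refine Or.inl (hk.subset ?_)
      rintro _ ⟨⟨q, hq, rfl⟩, hle⟩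
      exact ⟨q, ⟨hq, by simpa [hb] using hle⟩, rfl⟩
    · refine Or.inr (hk.subset ?_)
      rintro _ ⟨⟨q, hq, rfl⟩, hle⟩
      exact ⟨q, ⟨hq, by simpa [hb] using hle⟩, rfl⟩
  obtain ⟨F, hF, hBF⟩ := hf (f '' B) ⟨{f '' B}, by simpa using ⟨y, hy, hfy⟩, by simp⟩
  have hB := iQuickTo_of_mem_convQI isIdeal_densityZero hα.2.2.1
    ⟨F, hF, (subset_preimage_image f B).trans hBF⟩ hBx
  have hIci := isIdeal_densityZero.mono hB.2 hm
  refine isIdeal_densityZero.2.2.2 (isIdeal_densityZero.mono (isIdeal_densityZero.union hIci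
    (isIdeal_densityZero.2.2.1 _ (finite_Iio m))) ?_)
  rw [union_comm, Iio_union_Ici]

/-! ### Borel complexity -/

lemma isSigma0_mem_densityZero {X : Type*} [TopologicalSpace X] {U : ℕ → Set X}
    (hU : ∀ m, IsSigma0 3 (U m)) : IsSigma0 5 {f | {m | f ∈ U m} ∈ densityZero}ᶜ := by
  have hcount : ∀ j n : ℕ,
      IsSigma0 3 {f | (n + 1 : ℝ) / (j + 1) < ({m | f ∈ U m} ∩ Iic n).ncard} := by
    intro j n
    have heq : {f | (n + 1 : ℝ) / (j + 1) < ({m | f ∈ U m} ∩ Iic n).ncard} =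
        ⋃ G : {G : Finset ℕ // ↑G ⊆ Iic n ∧ (n + 1 : ℝ) / (j + 1) < G.card},
          ⋂ m ∈ G.1, U m := by
      ext f
      simp only [mem_ofPred_eq, mem_iUnion, mem_iInter]
      constructor
      · intro h
        have hfin : ({m | f ∈ U m} ∩ Iic n).Finite := (finite_Iic n).inter_of_right _
        rw [ncard_eq_toFinset_card _ hfin] at h
        exact ⟨⟨hfin.toFinset, fun m hm => (hfin.mem_toFinset.1 hm).2, h⟩,
          fun m hm => (hfin.mem_toFinset.1 hm).1⟩
      · rintro ⟨⟨G, hGn, hG⟩, hGU⟩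
        refine hG.trans_le (Nat.cast_le.2 ?_)
        rw [← ncard_coe_finset]
        exact ncard_le_ncard (fun m hm => ⟨hGU m hm, hGn hm⟩) ((finite_Iic n).inter_of_right _)
    rw [heq]
    exact IsSigma0.iUnion fun G => IsSigma0.biInter_finset hU G.1
  have heq : {f | {m | f ∈ U m} ∈ densityZero}ᶜ = ⋃ j : ℕ, (⋃ N : ℕ, (⋃ n : Ici N,
      {f | ((n : ℕ) + 1 : ℝ) / (j + 1) < ({m | f ∈ U m} ∩ Iic (n : ℕ)).ncard})ᶜ)ᶜ := by
    ext f
    simp only [mem_compl_iff, mem_ofPred_eq, mem_densityZero_iff, mem_iUnion, not_exists,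
      Subtype.forall, mem_Ici, not_forall]
  rw [heq]
  exact IsSigma0.iUnion fun j => IsSigma0.compl_succ <| IsSigma0.iUnion fun N =>
    IsSigma0.compl_succ <| IsSigma0.iUnion fun n => hcount j n

lemma isSigma0_finite_sep (Q : Q01 → Prop) :
    IsSigma0 2 {f : Q01 → Bool | {q ∈ toSet f | Q q}.Finite} := by
  have heq : {f : Q01 → Bool | {q ∈ toSet f | Q q}.Finite} =
      ⋃ F : Finset Q01, {f : Q01 → Bool | ∀ q, f q ∈ {t : Bool | t = true → Q q → q ∈ F}} := by
    ext f
    simp only [mem_ofPred_eq, mem_iUnion]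
    constructor
    · exact fun h => ⟨h.toFinset, fun q hq hQ => h.mem_toFinset.2 ⟨hq, hQ⟩⟩
    · exact fun ⟨F, hF⟩ => F.finite_toSet.subset fun q hq => hF q hq.1 hq.2
  rw [heq]
  refine IsSigma0.iUnion fun F => IsSigma0.of_compl ?_
  rw [ofPred_forall]
  exact (isClosed_iInter fun q =>
    (isClosed_discrete _).preimage (continuous_apply q)).isOpen_compl

/-- A set converging to `x` has all but finitely many points within less than `r` of `q`; for
infinite sets this expresses `|q - x| < r` without mentioning `x`. -/
def LimitNear (A : Set Q01) (q : Q01) (r : ℝ) : Prop :=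
  ∃ s : ℚ, (s : ℝ) < r ∧ {a ∈ A | (s : ℝ) < |qr a - qr q|}.Finite

lemma ConvTo.limitNear_iff {A : Set Q01} {x : ℝ} (hx : ConvTo A x) (hA : A.Infinite) (q : Q01)
    (r : ℝ) : LimitNear A q r ↔ |qr q - x| < r := by
  constructor
  · rintro ⟨s, hsr, hs⟩
    by_contra! hle
    refine hA ((hs.union (hx (r - s) (sub_pos.2 hsr))).subset fun a ha => ?_)
    by_contra hcon
    simp only [mem_union, mem_ofPred_eq, not_or, not_and, not_le, not_lt] at hcon
    have h1 := hcon.1 ha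
    have h2 := hcon.2 ha
    have h3 := abs_sub_le (qr q) (qr a) x
    rw [abs_sub_comm (qr q) (qr a)] at h3
    linarith
  · intro h
    obtain ⟨s, hs, hsr⟩ := exists_rat_btwn h
    refine ⟨s, hsr, (hx (s - |qr q - x|) (sub_pos.2 hs)).subset fun a ha => ⟨ha.1, ?_⟩⟩
    have h3 := abs_sub_le (qr a) x (qr q)
    rw [abs_sub_comm x (qr q)] at h3
    linarith [ha.2]

lemma isSigma0_limitNear (q : Q01) (r : ℝ) :
    IsSigma0 2 {f : Q01 → Bool | LimitNear (toSet f) q r} := by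
  have heq : {f : Q01 → Bool | LimitNear (toSet f) q r} = ⋃ s : {s : ℚ // (s : ℝ) < r},
      {f : Q01 → Bool | {a ∈ toSet f | ((s : ℚ) : ℝ) < |qr a - qr q|}.Finite} := by
    ext f
    simp [LimitNear]
  rw [heq]
  exact IsSigma0.iUnion fun s => isSigma0_finite_sep _

lemma iQuick_iff {I : Set (Set ℕ)} (hI : IsIdeal I) {α : ℕ → ℝ} (hα : StrictAnti α)
    {A : Set Q01} :
    IQuick I α A ↔ A.Finite ∨
      (∀ p p' : ℚ, p < p' → {q ∈ A | qr q ≤ p}.Finite ∨ {q ∈ A | (p' : ℝ) ≤ qr q}.Finite) ∧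
        {n | ∃ q ∈ A, ¬ LimitNear A q (α (n + 1)) ∧ LimitNear A q (α n)} ∈ I := by
  rw [← exists_convTo_iff]
  rcases A.finite_or_infinite with hA | hA
  · exact ⟨fun _ => Or.inl hA, fun _ => ⟨0, by simp, iQuickTo_of_finite hI hα hA 0⟩⟩
  have key : ∀ x, ConvTo A x →
      {n | ∃ q ∈ A, ¬ LimitNear A q (α (n + 1)) ∧ LimitNear A q (α n)} = annuliHit α A x :=
    fun x hx => by simp only [hx.limitNear_iff hA, not_lt, annuliHit]
  rw [or_iff_right hA]
  constructor
  · rintro ⟨x, hx, hAx⟩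
    exact ⟨⟨x, hx, hAx.1⟩, key x hAx.1 ▸ hAx.2⟩
  · rintro ⟨⟨x, hx, hAx⟩, hmem⟩
    exact ⟨x, hx, hAx, by rwa [key x hAx] at hmem⟩

lemma isSigma0_compl_iQuick {α : ℕ → ℝ} (hα : StrictAnti α) :
    IsSigma0 5 {f : Q01 → Bool | IQuick densityZero α (toSet f)}ᶜ := by
  set U : ℕ → Set (Q01 → Bool) := fun n => ⋃ q : Q01, (fun f : Q01 → Bool => f q) ⁻¹' {true} ∩
    ({f | LimitNear (toSet f) q (α (n + 1))}ᶜ ∩ {f | LimitNear (toSet f) q (α n)}) with hUdef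
  have hU : ∀ n, IsSigma0 3 (U n) := fun n => IsSigma0.iUnion fun q =>
    (((isClopen_discrete _).preimage (continuous_apply q)).isSigma0 2).inter
      ((isSigma0_limitNear q _).compl_succ.inter (isSigma0_limitNear q _).succ)
  have heq : {f : Q01 → Bool | IQuick densityZero α (toSet f)}ᶜ =
      {f : Q01 → Bool | {q ∈ toSet f | True}.Finite}ᶜ ∩
        ((⋃ p : {p : ℚ × ℚ // p.1 < p.2},
          ({f : Q01 → Bool | {q ∈ toSet f | qr q ≤ (p.1.1 : ℝ)}.Finite} ∪
            {f : Q01 → Bool | {q ∈ toSet f | (p.1.2 : ℝ) ≤ qr q}.Finite})ᶜ) ∪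
          {f | {n | f ∈ U n} ∈ densityZero}ᶜ) := by
    ext f
    have hfU : {n | f ∈ U n} = {n | ∃ q ∈ toSet f,
        ¬ LimitNear (toSet f) q (α (n + 1)) ∧ LimitNear (toSet f) q (α n)} := by
      ext n
      simp [hUdef, toSet]
    simp only [mem_compl_iff, mem_ofPred_eq, mem_inter_iff, mem_union, mem_iUnion, hfU,
      iQuick_iff isIdeal_densityZero hα, not_or, not_and_or, and_true, ofPred_mem_eq,
      not_forall, Subtype.exists, Prod.exists, exists_prop]
  rw [heq]
  refine (isSigma0_finite_sep _).compl_succ.succ.succ.inter (IsSigma0.union ?_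
    (isSigma0_mem_densityZero hU))
  exact IsSigma0.iUnion fun p =>
    ((isSigma0_finite_sep _).union (isSigma0_finite_sep _)).compl_succ.succ.succ

lemma mem_convQI_iff {I : Set (Set ℕ)} (hI : IsIdeal I) {α : ℕ → ℝ} (hα : StrictAnti α)
    {A : Set Q01} :
    A ∈ convQI I α ↔ ∃ k : ℕ, ∀ i : ℕ,
      IQuick I α (A ∩ {q | qr q ∈ Icc ((i : ℝ) / (k + 1)) ((i + 1) / (k + 1))}) := by
  classical
  constructor
  · rintro ⟨F, hF, hAF⟩
    choose! x hx hFx using hF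
    obtain ⟨k, hk⟩ : ∃ k : ℕ, ∀ S ∈ F, ∀ T ∈ F, x S ≠ x T → 1 / (k + 1 : ℝ) < |x S - x T| := by
      refine Eventually.exists (f := atTop) ?_
      simp only [Filter.eventually_all_finset]
      intro S _ T _
      rcases eq_or_ne (x S) (x T) with h | h
      · exact Eventually.of_forall fun k hne => absurd h hne
      · filter_upwards [(tendsto_order.1 (tendsto_one_div_add_atTop_nhds_zero_nat (𝕜 := ℝ))).2 _
          (abs_pos.2 (sub_ne_zero.2 h))] with k hk _ using hk
    refine ⟨k, fun i => ?_⟩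
    set a : ℝ := (i : ℝ) / (k + 1)
    set b : ℝ := ((i : ℝ) + 1) / (k + 1)
    have hab : b - a = 1 / (k + 1) := by simp only [a, b]; ring
    obtain ⟨y, hy, hyF⟩ : ∃ y ∈ Icc (0 : ℝ) 1, ∀ S ∈ F, x S ∈ Icc a b → x S = y := by
      by_cases h : ∃ S ∈ F, x S ∈ Icc a b
      · obtain ⟨S, hS, hSab⟩ := h
        refine ⟨x S, hx S hS, fun T hT hTab => ?_⟩
        by_contra hne
        refine absurd (hk T hT S hS hne) (not_lt.2 ?_)
        rw [← hab, abs_le]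
        exact ⟨by linarith [hTab.1, hSab.2], by linarith [hTab.2, hSab.1]⟩
      · exact ⟨0, by simp, fun S hS hSab => absurd ⟨S, hS, hSab⟩ h⟩
    refine ⟨y, hy, (iQuickTo_biUnion (F := F) (S := fun S => S ∩ {q | qr q ∈ Icc a b}) hI hα
      fun S hS => ?_).mono hI fun q hq => ?_⟩
    · by_cases hSab : x S ∈ Icc a b
      · rw [← hyF S hS hSab]
        exact (hFx S hS).mono hI inter_subset_left
      · exact iQuickTo_of_finite hI hα ((hFx S hS).1.finite_inter_Icc hSab) y
    · obtain ⟨S, hS, hqS⟩ := hAF hq.1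
      exact mem_biUnion hS ⟨hqS, hq.2⟩
  · rintro ⟨k, hk⟩
    refine ⟨(Finset.range (k + 2)).image fun i : ℕ =>
      A ∩ {q | qr q ∈ Icc ((i : ℝ) / (k + 1)) ((i + 1) / (k + 1))}, ?_, fun q hq => ?_⟩
    · intro S hS
      obtain ⟨i, -, rfl⟩ := Finset.mem_image.1 hS
      exact hk i
    · have hq0 := (qr_mem_Icc q).1
      have hkpos : (0 : ℝ) < k + 1 := by positivity
      have hfloor := Nat.floor_le (mul_nonneg hq0 hkpos.le)
      have hfloor' := Nat.lt_floor_add_one (qr q * (k + 1))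
      have hlt : ⌊qr q * (k + 1)⌋₊ < k + 2 := by
        have : (⌊qr q * (k + 1)⌋₊ : ℝ) ≤ k + 1 :=
          hfloor.trans (mul_le_of_le_one_left hkpos.le (qr_mem_Icc q).2)
        have : ⌊qr q * (k + 1)⌋₊ ≤ k + 1 := by exact_mod_cast this
        omega
      refine ⟨_, Finset.mem_coe.2 (Finset.mem_image_of_mem _ (Finset.mem_range.2 hlt)), hq, ?_⟩
      exact ⟨(div_le_iff₀ hkpos).2 hfloor, (le_div_iff₀ hkpos).2 hfloor'.le⟩

theorem isSigma0_convQI {α : ℕ → ℝ} (hα : StrictAnti α) :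
    IsSigma0 6 {f : Q01 → Bool | toSet f ∈ convQI densityZero α} := by
  classical
  set g : ℕ → ℕ → (Q01 → Bool) → Q01 → Bool := fun k i f q =>
    f q && decide (qr q ∈ Icc ((i : ℝ) / (k + 1)) ((i + 1) / (k + 1))) with hgdef
  have hg : ∀ k i, Continuous (g k i) := fun k i => continuous_pi fun q =>
    (continuous_of_discreteTopology (f := fun t : Bool =>
      t && decide (qr q ∈ Icc ((i : ℝ) / (k + 1)) ((i + 1) / (k + 1))))).comp (continuous_apply q)
  have hgset : ∀ k i f, toSet (g k i f) =
      toSet f ∩ {q | qr q ∈ Icc ((i : ℝ) / (k + 1)) ((i + 1) / (k + 1))} := fun k i f => by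
    ext q
    simp [hgdef, toSet]
  have heq : {f : Q01 → Bool | toSet f ∈ convQI densityZero α} = ⋃ k : ℕ, (⋃ i : ℕ,
      g k i ⁻¹' {f | IQuick densityZero α (toSet f)}ᶜ)ᶜ := by
    ext f
    simp only [mem_ofPred_eq, mem_convQI_iff isIdeal_densityZero hα, mem_iUnion, mem_compl_iff,
      mem_preimage, hgset, not_exists, not_not]
  rw [heq]
  exact IsSigma0.iUnion fun k => IsSigma0.compl_succ <| IsSigma0.iUnion fun i =>
    (isSigma0_compl_iQuick hα).preimage (hg k i)

lemma memS_one_div_two_pow : memS fun n : ℕ => 1 / 2 ^ (n + 1) := by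
  refine ⟨fun n => by positivity, fun n => ?_, fun m n hmn => ?_, ?_⟩
  · refine one_div_le_one_div_of_le two_pos ?_
    linarith [pow_succ (2 : ℝ) n, one_le_pow₀ (n := n) (one_le_two : (1 : ℝ) ≤ 2)]
  · exact one_div_lt_one_div_of_lt (by positivity)
      (pow_lt_pow_right₀ one_lt_two (Nat.succ_lt_succ hmn))
  · simpa [Function.comp_def] using (tendsto_pow_atTop_nhds_zero_of_lt_one
      (by norm_num : (0 : ℝ) ≤ 1 / 2) (by norm_num)).comp (tendsto_add_atTop_nat 1)

theorem counterexample_to_Hrusak_question :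
    IsSigma0 6 {f : Q01 → Bool |
      toSet f ∈ convQI densityZero (fun n : ℕ => 1 / 2 ^ (n + 1))} ∧
    ¬ (∃ J : Set (Set Q01), IsIdeal J ∧ IsPPlus J ∧
        convQI densityZero (fun n : ℕ => 1 / 2 ^ (n + 1)) ⊆ J) ∧
    ¬ KatLE convIdeal (convQI densityZero (fun n : ℕ => 1 / 2 ^ (n + 1))) := by
  exact ⟨isSigma0_convQI memS_one_div_two_pow.2.2.1, not_extendable_convQI memS_one_div_two_pow,
    not_katLE_convQI memS_one_div_two_pow⟩
end
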